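/- Let A be a unital associative algebra over ℂ, let L : A → A be a Lie derivation, and let z₀ ∈ A be a central idempotent such that z₀·x ∈ Z(A) for every x ∈ A; set z₁ = 1 − z₀. Then each of the ℂ-linear maps F₁(x) = z₀·L(z₁·x), F₂(x) = z₁·L(z₀·x), and F₃(x) = z₀·L(z₀·x) is a center-valued trace on A: for i = 1, 2, 3 and all x, y ∈ A one has Fᵢ(x) ∈ Z(A) and Fᵢ(x*y) = Fᵢ(y*x). -/

import Mathlib

/-! Write `T` for multiplication by `z₀`. It is a center-valued trace, since
`z₀xy = (z₀x)y = y(z₀x) = z₀yx`. A Lie derivation `L` preserves commutators and the center, so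
`T ∘ L`, `L ∘ T` and `T ∘ L ∘ T` are center-valued traces as well, and the three maps
`T ∘ L ∘ (1 - T)`, `(1 - T) ∘ L ∘ T` and `T ∘ L ∘ T` are combinations of these. -/

theorem lieDerivation_apply_mem_center {R 𝔤 : Type*} [CommRing R] [LieRing 𝔤] [LieAlgebra R 𝔤]
    (D : LieDerivation R 𝔤 𝔤) {x : 𝔤} (hx : x ∈ LieAlgebra.center R 𝔤) :
    D x ∈ LieAlgebra.center R 𝔤 := by
  rw [LieModule.mem_maxTrivSubmodule] at hx ⊢
  intro y
  have h : D ⁅y, x⁆ = ⁅y, D x⁆ + ⁅D y, x⁆ := D.apply_lie_eq_add y x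
  rwa [hx, hx, map_zero, add_zero, eq_comm] at h

/-- The center-valued traces on an algebra `A`: linear maps `E : A → A` with values in the center
and with `E (x * y) = E (y * x)`. They are collected into a submodule of the endomorphisms of `A`,
so that linear combinations of traces are traces. -/
def centerValuedTraces (R A : Type*) [CommSemiring R] [Semiring A] [Algebra R A] :
    Submodule R (A →ₗ[R] A) where
  carrier := {E | (∀ x, E x ∈ Subalgebra.center R A) ∧ ∀ x y, E (x * y) = E (y * x)}
  zero_mem' := ⟨fun _ => zero_mem _, fun _ _ => rfl⟩
  add_mem' hE hF := ⟨fun x => add_mem (hE.1 x) (hF.1 x),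
    fun x y => congrArg₂ (· + ·) (hE.2 x y) (hF.2 x y)⟩
  smul_mem' c _ hE := ⟨fun x => Subalgebra.smul_mem _ (hE.1 x) c,
    fun x y => congrArg (c • ·) (hE.2 x y)⟩

namespace centerValuedTraces

variable {R A : Type*} [CommSemiring R] [Semiring A] [Algebra R A] {E : A →ₗ[R] A}

theorem mem_iff : E ∈ centerValuedTraces R A ↔
    (∀ x a, E x * a = a * E x) ∧ ∀ x y, E (x * y) = E (y * x) := by
  refine and_congr_left fun _ => forall_congr' fun x => ?_
  simp only [Subalgebra.mem_center_iff, eq_comm]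

theorem mulLeft_mem {z : A} (hz : ∀ x, z * x ∈ Subalgebra.center R A) :
    LinearMap.mulLeft R z ∈ centerValuedTraces R A := by
  refine ⟨hz, fun x y => ?_⟩
  have hz_comm : y * z = z * y := by
    simpa only [mul_one] using Subalgebra.mem_center_iff.1 (hz 1) y
  calc z * (x * y) = z * x * y := (mul_assoc z x y).symm
    _ = y * (z * x) := (Subalgebra.mem_center_iff.1 (hz x) y).symm
    _ = z * (y * x) := by rw [← mul_assoc, hz_comm, mul_assoc]

theorem comp_mem {f : A →ₗ[R] A}
    (hf : ∀ x ∈ Subalgebra.center R A, f x ∈ Subalgebra.center R A)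
    (hE : E ∈ centerValuedTraces R A) : f ∘ₗ E ∈ centerValuedTraces R A :=
  ⟨fun x => hf (E x) (hE.1 x), fun x y => congrArg f (hE.2 x y)⟩

end centerValuedTraces

section LieDerivation

attribute [local instance] LieRing.ofAssociativeRing

variable {R A : Type*} [CommRing R] [Ring A] [Algebra R A]

theorem mem_lieAlgebra_center_iff_mem_subalgebra_center {x : A} :
    x ∈ LieAlgebra.center R A ↔ x ∈ Subalgebra.center R A := by
  simp only [LieModule.mem_maxTrivSubmodule, Subalgebra.mem_center_iff, Ring.lie_def, sub_eq_zero]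

namespace centerValuedTraces

variable {E : A →ₗ[R] A}

theorem apply_lie (hE : E ∈ centerValuedTraces R A) (x y : A) : E ⁅x, y⁆ = 0 := by
  rw [Ring.lie_def, map_sub, hE.2, sub_self]

theorem comp_lieDerivation_mem (hE : E ∈ centerValuedTraces R A) (D : LieDerivation R A A) :
    E ∘ₗ (D : A →ₗ[R] A) ∈ centerValuedTraces R A := by
  refine ⟨fun x => hE.1 (D x), fun x y => sub_eq_zero.1 ?_⟩
  calc E (D (x * y)) - E (D (y * x)) = E (D ⁅x, y⁆) := by rw [Ring.lie_def, map_sub, map_sub]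
    _ = E ⁅x, D y⁆ + E ⁅D x, y⁆ := by rw [D.apply_lie_eq_add, map_add]
    _ = 0 := by rw [apply_lie hE, apply_lie hE, add_zero]

theorem lieDerivation_comp_mem (D : LieDerivation R A A) (hE : E ∈ centerValuedTraces R A) :
    (D : A →ₗ[R] A) ∘ₗ E ∈ centerValuedTraces R A :=
  comp_mem (fun _ hx => mem_lieAlgebra_center_iff_mem_subalgebra_center.1 <|
    lieDerivation_apply_mem_center D <|
      mem_lieAlgebra_center_iff_mem_subalgebra_center.2 hx) hE

end centerValuedTraces

open centerValuedTraces LinearMap in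
theorem corner_maps_are_center_valued_traces_general (L : LieDerivation R A A) {z : A}
    (hz : ∀ x, z * x ∈ Subalgebra.center R A) :
    mulLeft R z ∘ₗ (L : A →ₗ[R] A) ∘ₗ mulLeft R (1 - z) ∈ centerValuedTraces R A ∧
      mulLeft R (1 - z) ∘ₗ (L : A →ₗ[R] A) ∘ₗ mulLeft R z ∈ centerValuedTraces R A ∧
      mulLeft R z ∘ₗ (L : A →ₗ[R] A) ∘ₗ mulLeft R z ∈ centerValuedTraces R A := by
  have hT : mulLeft R z ∈ centerValuedTraces R A := mulLeft_mem hz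
  have hTL := comp_lieDerivation_mem hT L
  have hLT := lieDerivation_comp_mem L hT
  have hTLT := comp_mem (f := mulLeft R z) (fun x _ => hz x) hLT
  have mulLeft_one_sub : mulLeft R (1 - z) = LinearMap.id - mulLeft R z := by
    ext x
    simp only [mulLeft_apply, LinearMap.sub_apply, id_apply, sub_mul, one_mul]
  refine ⟨?_, ?_, hTLT⟩
  · rw [mulLeft_one_sub, comp_sub, comp_sub, comp_id]
    exact sub_mem hTL hTLT
  · rw [mulLeft_one_sub, sub_comp, id_comp]
    exact sub_mem hLT hTLT

end LieDerivation

/-- Lemma 10 (ii) of the paper: if `L` is a Lie derivation on a unital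
associative complex algebra `A` and `z₀` is a central idempotent such that
`z₀·x` is central for every `x`, then with `z₁ = 1 − z₀`, the maps
`F₁(x) = z₀·L(z₁·x)`, `F₂(x) = z₁·L(z₀·x)` and `F₃(x) = z₀·L(z₀·x)` are
center-valued traces on `A`. -/
theorem corner_maps_are_center_valued_traces
    {A : Type*} [Ring A] [Algebra ℂ A]
    (L : A →ₗ[ℂ] A)
    (hL : ∀ x y : A, L (x * y - y * x) =
      (L x * y - y * L x) + (x * L y - L y * x))
    (z₀ : A) (hz₀ : ∀ a : A, z₀ * a = a * z₀) (hz₀z₀ : z₀ * z₀ = z₀)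
    (hcomm : ∀ x : A, ∀ a : A, (z₀ * x) * a = a * (z₀ * x)) :
    ((∀ x : A, ∀ a : A, (z₀ * L ((1 - z₀) * x)) * a = a * (z₀ * L ((1 - z₀) * x))) ∧
      (∀ x y : A, z₀ * L ((1 - z₀) * (x * y)) = z₀ * L ((1 - z₀) * (y * x)))) ∧
    ((∀ x : A, ∀ a : A, ((1 - z₀) * L (z₀ * x)) * a = a * ((1 - z₀) * L (z₀ * x))) ∧
      (∀ x y : A, (1 - z₀) * L (z₀ * (x * y)) = (1 - z₀) * L (z₀ * (y * x)))) ∧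
    ((∀ x : A, ∀ a : A, (z₀ * L (z₀ * x)) * a = a * (z₀ * L (z₀ * x))) ∧
      (∀ x y : A, z₀ * L (z₀ * (x * y)) = z₀ * L (z₀ * (y * x)))) := by
  let _ : LieRing A := LieRing.ofAssociativeRing
  simpa only [centerValuedTraces.mem_iff, LinearMap.comp_apply, LinearMap.mulLeft_apply] using
    corner_maps_are_center_valued_traces_general
      ⟨L, fun x y => by simp only [Ring.lie_def, hL]; abel⟩
      fun x => Subalgebra.mem_center_iff.2 fun a => (hcomm x a).symm
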